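/- Let λ, α > 0, β₁, β₂ ≥ 0, and for i ∈ {1,2} let Sᵢ, Rᵢ be Borel probability measures on [0,∞) with finite first moments μ_{i,1}, γ_{i,1} and Laplace transforms S̃ᵢ, R̃ᵢ; set hᵢ(z) = λ + βᵢ − λz − βᵢR̃ᵢ(λ − λz) and δᵢ(z) = S̃ᵢ(hᵢ(z)). Assume λμ_{1,1}(1 + β₁γ_{1,1}) < 1. Then the ratio [λ(1 − z) + α(1 − δ₂(z))](1 − δ₁(z)) / ((δ₁(z) − z)h₁(z)) tends, as z → 1⁻, to μ_{1,1}(λ + αλμ_{2,1}(1 + β₂γ_{2,1}))/(1 − λμ_{1,1}(1 + β₁γ_{1,1})). -/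

import Mathlib

open MeasureTheory

/-- Laplace transform of a (Borel) measure on `ℝ`. -/
noncomputable def lapl (μ : Measure ℝ) (θ : ℝ) : ℝ :=
  ∫ x, Real.exp (-θ * x) ∂μ

/-!
All factors of the ratio vanish at `z = 1`, so its limit is the corresponding ratio of their left
derivatives there. These come from differentiating the Laplace transforms at `0`, which for a
measure with only a first moment is possible from the right alone; this suffices because `hᵢ` maps
`(-∞, 1]` into `[0, ∞)`. The left derivatives at `1` are `-λ (1 + βᵢ γᵢ)` for `hᵢ` and
`λ μᵢ (1 + βᵢ γᵢ)` for `δᵢ`.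
-/

open Filter Set Topology

section Calculus

variable {𝕜 : Type*}

theorem tendsto_div_of_hasDerivWithinAt [NontriviallyNormedField 𝕜] {f g : 𝕜 → 𝕜} {f' g' a : 𝕜}
    {s : Set 𝕜} (hf : HasDerivWithinAt f f' s a) (hg : HasDerivWithinAt g g' s a)
    (hfa : f a = 0) (hga : g a = 0) (hg' : g' ≠ 0) :
    Tendsto (fun z ↦ f z / g z) (𝓝[s \ {a}] a) (𝓝 (f' / g')) := by
  rw [hasDerivWithinAt_iff_tendsto_slope] at hf hg
  refine (hf.div hg hg').congr' ?_
  filter_upwards [self_mem_nhdsWithin] with z hz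
  have hza : z - a ≠ 0 := sub_ne_zero.2 hz.2
  simp only [Pi.div_apply, slope_def_field, hfa, hga, sub_zero]
  exact div_div_div_cancel_right₀ hza _ _

theorem tendsto_add_one_sub_div_sub_id [NontriviallyNormedField 𝕜] {a b f' g' : 𝕜} {f g : 𝕜 → 𝕜}
    {s : Set 𝕜} (hf : HasDerivWithinAt f f' s 1) (hg : HasDerivWithinAt g g' s 1)
    (hf_one : f 1 = 1) (hg_one : g 1 = 1) (hf' : f' ≠ 1) :
    Tendsto (fun z ↦ (a * (1 - z) + b * (1 - g z)) / (f z - z)) (𝓝[s \ {1}] 1)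
      (𝓝 ((a + b * g') / (1 - f'))) := by
  have h_id := hasDerivWithinAt_id (1 : 𝕜) s
  have h_num := ((h_id.const_sub 1).const_mul a).add ((hg.const_sub 1).const_mul b)
  have h_div := tendsto_div_of_hasDerivWithinAt h_num (hf.sub h_id) (by simp [hg_one])
    (by simp [hf_one]) (sub_ne_zero.2 hf')
  have h_limit : (a + b * g') / (1 - f') = (a * -1 + b * -g') / (f' - 1) := by
    rw [← neg_div_neg_eq, neg_sub]
    ring
  exact h_limit ▸ h_div

theorem hasDerivWithinAt_integral_of_dominated_lip [RCLike 𝕜] {Ω E : Type*} [MeasurableSpace Ω]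
    {μ : Measure Ω} [NormedAddCommGroup E] [NormedSpace ℝ E] [NormedSpace 𝕜 E] {F : 𝕜 → Ω → E}
    {F' : Ω → E} {bound : Ω → ℝ} {s : Set 𝕜} {t₀ : 𝕜} (ht₀ : t₀ ∈ s)
    (hF_int : ∀ t ∈ s, Integrable (F t) μ)
    (h_lip : ∀ᵐ ω ∂μ, ∀ t ∈ s, ‖F t ω - F t₀ ω‖ ≤ bound ω * ‖t - t₀‖)
    (bound_integrable : Integrable bound μ)
    (h_diff : ∀ᵐ ω ∂μ, HasDerivWithinAt (F · ω) (F' ω) s t₀) :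
    HasDerivWithinAt (fun t ↦ ∫ ω, F t ω ∂μ) (∫ ω, F' ω ∂μ) s t₀ := by
  have h_slope : Tendsto (fun t ↦ ∫ ω, slope (F · ω) t₀ t ∂μ) (𝓝[s \ {t₀}] t₀)
      (𝓝 (∫ ω, F' ω ∂μ)) := by
    refine tendsto_integral_filter_of_dominated_convergence bound ?_ ?_ bound_integrable ?_
    · filter_upwards [self_mem_nhdsWithin] with t ht
      exact (((hF_int t ht.1).sub (hF_int t₀ ht₀)).smul (t - t₀)⁻¹).aestronglyMeasurable
    · filter_upwards [self_mem_nhdsWithin] with t ht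
      filter_upwards [h_lip] with ω hω
      have ht_pos : 0 < ‖t - t₀‖ := norm_sub_pos_iff.2 ht.2
      rw [slope_def_module, norm_smul, norm_inv, inv_mul_le_iff₀ ht_pos, mul_comm]
      exact hω t ht.1
    · filter_upwards [h_diff] with ω hω
      exact hasDerivWithinAt_iff_tendsto_slope.1 hω
  refine hasDerivWithinAt_iff_tendsto_slope.2 (h_slope.congr' ?_)
  filter_upwards [self_mem_nhdsWithin] with t ht
  simp only [slope_def_module]
  rw [integral_smul, integral_sub (hF_int t ht.1) (hF_int t₀ ht₀)]

end Calculus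

theorem measure_Iio_eq_zero_iff_ae_le {α : Type*} [LinearOrder α] [MeasurableSpace α]
    {μ : Measure α} {a : α} : μ (Iio a) = 0 ↔ ∀ᵐ x ∂μ, a ≤ x := by
  simp only [measure_eq_zero_iff_ae_notMem, mem_Iio, not_lt]

section LaplaceTransform

theorem abs_exp_neg_mul_sub_le {x a b : ℝ} (hx : 0 ≤ x) (ha : 0 ≤ a) (hb : 0 ≤ b) :
    |Real.exp (-a * x) - Real.exp (-b * x)| ≤ x * |a - b| := by
  have h_deriv : ∀ t ∈ Ici (0 : ℝ),
      HasDerivWithinAt (fun t ↦ Real.exp (-t * x)) (Real.exp (-t * x) * (-1 * x)) (Ici 0) t :=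
    fun t _ ↦ ((hasDerivWithinAt_id t _).neg.mul_const x).exp
  refine (convex_Ici 0).norm_image_sub_le_of_norm_hasDerivWithin_le h_deriv (fun t ht ↦ ?_) hb ha
  have h_exp : Real.exp (-t * x) ≤ 1 :=
    Real.exp_le_one_iff.2 (mul_nonpos_of_nonpos_of_nonneg (neg_nonpos.2 ht) hx)
  simpa [abs_of_nonneg hx] using mul_le_of_le_one_left hx h_exp

variable {μ : Measure ℝ} {θ : ℝ}

theorem lapl_zero : lapl μ 0 = μ.real univ := by
  simp [lapl]

variable [IsFiniteMeasure μ]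

theorem integrable_exp_neg_mul (hμ : ∀ᵐ x ∂μ, 0 ≤ x) (hθ : 0 ≤ θ) :
    Integrable (fun x ↦ Real.exp (-θ * x)) μ := by
  have h := ProbabilityTheory.integrable_exp_mul_of_le (X := fun x ↦ -x) θ 0 hθ (by fun_prop)
    (hμ.mono fun _ hx ↦ neg_nonpos.2 hx)
  simpa only [mul_neg, neg_mul] using h

theorem antitoneOn_lapl (hμ : ∀ᵐ x ∂μ, 0 ≤ x) : AntitoneOn (lapl μ) (Ici 0) := by
  intro a ha b hb hab
  refine integral_mono_ae (integrable_exp_neg_mul hμ hb) (integrable_exp_neg_mul hμ ha) ?_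
  filter_upwards [hμ] with x hx
  gcongr

theorem hasDerivWithinAt_lapl (hμ : ∀ᵐ x ∂μ, 0 ≤ x) (hi : Integrable (fun x ↦ x) μ)
    (hθ : 0 ≤ θ) :
    HasDerivWithinAt (lapl μ) (-∫ x, x * Real.exp (-θ * x) ∂μ) (Ici 0) θ := by
  rw [← integral_neg]
  refine hasDerivWithinAt_integral_of_dominated_lip hθ
    (fun t ht ↦ integrable_exp_neg_mul hμ ht) ?_ hi ?_
  · filter_upwards [hμ] with x hx t ht
    exact abs_exp_neg_mul_sub_le hx ht hθ
  · exact .of_forall fun x ↦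
      ((hasDerivWithinAt_id θ (Ici 0)).neg.mul_const x).exp.congr_deriv (by simp [mul_comm])

theorem hasDerivWithinAt_lapl_zero (hμ : ∀ᵐ x ∂μ, 0 ≤ x) (hi : Integrable (fun x ↦ x) μ) :
    HasDerivWithinAt (lapl μ) (-∫ x, x ∂μ) (Ici 0) 0 := by
  simpa using hasDerivWithinAt_lapl hμ hi le_rfl

end LaplaceTransform

section Completion

/-- The function `hᵢ` of the queue. If a service of length `x` fails at rate `beta` and each failure
costs a repair with law `R`, then the number of arrivals, at rate `lam`, until its completion has
probability generating function `z ↦ exp (-x * completionExponent lam beta R z)`. -/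
noncomputable def completionExponent (lam beta : ℝ) (R : Measure ℝ) (z : ℝ) : ℝ :=
  lam + beta - lam * z - beta * lapl R (lam - lam * z)

/-- The function `δᵢ` of the queue: the probability generating function of the number of arrivals
during a service with law `S`, including the repairs that interrupt it. -/
noncomputable def completionPGF (lam beta : ℝ) (S R : Measure ℝ) (z : ℝ) : ℝ :=
  lapl S (completionExponent lam beta R z)

variable {lam beta z : ℝ} {S R : Measure ℝ} [IsProbabilityMeasure R]

theorem completionExponent_one : completionExponent lam beta R 1 = 0 := by
  simp [completionExponent, lapl_zero]

theorem completionPGF_one [IsProbabilityMeasure S] : completionPGF lam beta S R 1 = 1 := by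
  simp [completionPGF, completionExponent_one, lapl_zero]

theorem completionExponent_nonneg (hlam : 0 ≤ lam) (hbeta : 0 ≤ beta) (hR : ∀ᵐ x ∂ R, 0 ≤ x)
    (hz : z ≤ 1) : 0 ≤ completionExponent lam beta R z := by
  have hθ : 0 ≤ lam - lam * z := sub_nonneg.2 (mul_le_of_le_one_right hlam hz)
  have hR_le : lapl R (lam - lam * z) ≤ 1 := by
    simpa [lapl_zero] using antitoneOn_lapl hR self_mem_Ici hθ hθ
  calc
    0 ≤ (lam - lam * z) + beta * (1 - lapl R (lam - lam * z)) :=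
      add_nonneg hθ (mul_nonneg hbeta (sub_nonneg.2 hR_le))
    _ = completionExponent lam beta R z := by rw [completionExponent]; ring

theorem hasDerivWithinAt_completionExponent_one (hlam : 0 ≤ lam) (hR : ∀ᵐ x ∂ R, 0 ≤ x)
    (hiR : Integrable (fun x ↦ x) R) :
    HasDerivWithinAt (completionExponent lam beta R) (-(lam * (1 + beta * ∫ x, x ∂ R)))
      (Iic 1) 1 := by
  have h_lin : HasDerivWithinAt (fun z ↦ lam * z) lam (Iic 1) 1 := by
    simpa using (hasDerivWithinAt_id (1 : ℝ) (Iic 1)).const_mul lam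
  have h_maps : MapsTo (fun z ↦ lam - lam * z) (Iic 1) (Ici 0) :=
    fun z hz ↦ sub_nonneg.2 (mul_le_of_le_one_right hlam hz)
  have h_lapl := (hasDerivWithinAt_lapl_zero hR hiR).comp_of_eq 1 (h_lin.const_sub lam) h_maps
    (by simp)
  exact ((h_lin.const_sub (lam + beta)).sub (h_lapl.const_mul beta)).congr_deriv (by ring)

theorem hasDerivWithinAt_completionPGF_one [IsFiniteMeasure S] (hlam : 0 ≤ lam)
    (hbeta : 0 ≤ beta) (hS : ∀ᵐ x ∂S, 0 ≤ x) (hR : ∀ᵐ x ∂ R, 0 ≤ x)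
    (hiS : Integrable (fun x ↦ x) S) (hiR : Integrable (fun x ↦ x) R) :
    HasDerivWithinAt (completionPGF lam beta S R)
      (lam * (∫ x, x ∂S) * (1 + beta * ∫ x, x ∂ R)) (Iic 1) 1 := by
  have h_maps : MapsTo (completionExponent lam beta R) (Iic 1) (Ici 0) :=
    fun z hz ↦ completionExponent_nonneg hlam hbeta hR hz
  have h_comp := (hasDerivWithinAt_lapl_zero hS hiS).comp_of_eq 1
    (hasDerivWithinAt_completionExponent_one hlam hR hiR) h_maps completionExponent_one.symm
  exact h_comp.congr_deriv (by ring)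

theorem tendsto_one_sub_completionPGF_div_completionExponent [IsProbabilityMeasure S]
    (hlam : 0 < lam) (hbeta : 0 ≤ beta) (hS : ∀ᵐ x ∂S, 0 ≤ x) (hR : ∀ᵐ x ∂ R, 0 ≤ x)
    (hiS : Integrable (fun x ↦ x) S) (hiR : Integrable (fun x ↦ x) R) :
    Tendsto (fun z ↦ (1 - completionPGF lam beta S R z) / completionExponent lam beta R z)
      (𝓝[<] 1) (𝓝 (∫ x, x ∂S)) := by
  have hγ : 0 ≤ ∫ x, x ∂ R := integral_nonneg_of_ae hR
  have h_exponent := hasDerivWithinAt_completionExponent_one (beta := beta) hlam.le hR hiR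
  have h_pgf := hasDerivWithinAt_completionPGF_one hlam.le hbeta hS hR hiS hiR
  have h_ne : lam * (1 + beta * ∫ x, x ∂ R) ≠ 0 := by positivity
  have h_div := tendsto_div_of_hasDerivWithinAt (h_pgf.const_sub 1) h_exponent
    (by simp [completionPGF_one]) completionExponent_one (neg_ne_zero.2 h_ne)
  rw [Iic_sdiff_right] at h_div
  convert h_div using 2
  rw [neg_div_neg_eq, eq_div_iff h_ne]
  ring

end Completion

theorem incoming_factor_limit_general {lam alpha beta1 beta2 : ℝ}
    (hlam : 0 < lam) (hbeta1 : 0 ≤ beta1) (hbeta2 : 0 ≤ beta2)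
    {S1 R1 S2 R2 : Measure ℝ}
    [IsProbabilityMeasure S1] [IsProbabilityMeasure R1]
    [IsProbabilityMeasure S2] [IsProbabilityMeasure R2]
    (hS1 : S1 (Iio 0) = 0) (hR1 : R1 (Iio 0) = 0) (hS2 : S2 (Iio 0) = 0) (hR2 : R2 (Iio 0) = 0)
    (hiS1 : Integrable (fun x ↦ x) S1) (hiR1 : Integrable (fun x ↦ x) R1)
    (hiS2 : Integrable (fun x ↦ x) S2) (hiR2 : Integrable (fun x ↦ x) R2)
    {mu11 gamma11 mu21 gamma21 : ℝ}
    (hmu11 : mu11 = ∫ x, x ∂S1) (hgamma11 : gamma11 = ∫ x, x ∂ R1)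
    (hmu21 : mu21 = ∫ x, x ∂S2) (hgamma21 : gamma21 = ∫ x, x ∂ R2)
    {h1 h2 δ1 δ2 : ℝ → ℝ}
    (hh1 : ∀ z, h1 z = lam + beta1 - lam * z - beta1 * lapl R1 (lam - lam * z))
    (hh2 : ∀ z, h2 z = lam + beta2 - lam * z - beta2 * lapl R2 (lam - lam * z))
    (hδ1 : ∀ z, δ1 z = lapl S1 (h1 z)) (hδ2 : ∀ z, δ2 z = lapl S2 (h2 z))
    (hload : lam * mu11 * (1 + beta1 * gamma11) ≠ 1) :
    Tendsto (fun z ↦ (lam * (1 - z) + alpha * (1 - δ2 z)) * (1 - δ1 z) / ((δ1 z - z) * h1 z))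
      (𝓝[<] 1)
      (𝓝 (mu11 * (lam + alpha * (lam * mu21 * (1 + beta2 * gamma21))) /
        (1 - lam * mu11 * (1 + beta1 * gamma11)))) := by
  obtain rfl : h1 = completionExponent lam beta1 R1 := funext hh1
  obtain rfl : h2 = completionExponent lam beta2 R2 := funext hh2
  obtain rfl : δ1 = completionPGF lam beta1 S1 R1 := funext hδ1
  obtain rfl : δ2 = completionPGF lam beta2 S2 R2 := funext hδ2
  subst hmu11 hgamma11 hmu21 hgamma21
  rw [measure_Iio_eq_zero_iff_ae_le] at hS1 hR1 hS2 hR2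
  have hδ1_deriv := hasDerivWithinAt_completionPGF_one hlam.le hbeta1 hS1 hR1 hiS1 hiR1
  have hδ2_deriv := hasDerivWithinAt_completionPGF_one hlam.le hbeta2 hS2 hR2 hiS2 hiR2
  have h_per_exponent :=
    tendsto_one_sub_completionPGF_div_completionExponent hlam hbeta1 hS1 hR1 hiS1 hiR1
  have h_quotient := tendsto_add_one_sub_div_sub_id (a := lam) (b := alpha) hδ1_deriv hδ2_deriv
    completionPGF_one completionPGF_one hload
  rw [Iic_sdiff_right] at h_quotient
  rw [mul_comm (∫ x, x ∂S1), ← div_mul_eq_mul_div]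
  exact (h_quotient.mul h_per_exponent).congr fun z ↦ div_mul_div_comm _ _ _ _

/-- under the stability condition `λμ_{1,1}(1 + β₁γ_{1,1}) < 1`, the
ratio `[λ(1 − z) + α(1 − δ₂(z))](1 − δ₁(z)) / ((δ₁(z) − z)h₁(z))` tends, as `z → 1⁻`,
to `μ_{1,1}(λ + αλμ_{2,1}(1 + β₂γ_{2,1}))/(1 − λμ_{1,1}(1 + β₁γ_{1,1}))`. -/
theorem incoming_factor_limit (lam alpha beta1 beta2 : ℝ)
    (hlam : 0 < lam) (halpha : 0 < alpha)
    (hbeta1 : 0 ≤ beta1) (hbeta2 : 0 ≤ beta2)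
    (S1 R1 S2 R2 : Measure ℝ)
    [IsProbabilityMeasure S1] [IsProbabilityMeasure R1]
    [IsProbabilityMeasure S2] [IsProbabilityMeasure R2]
    (hS1 : S1 (Set.Iio 0) = 0) (hR1 : R1 (Set.Iio 0) = 0)
    (hS2 : S2 (Set.Iio 0) = 0) (hR2 : R2 (Set.Iio 0) = 0)
    (hiS1 : Integrable (fun x => x) S1) (hiR1 : Integrable (fun x => x) R1)
    (hiS2 : Integrable (fun x => x) S2) (hiR2 : Integrable (fun x => x) R2)
    (mu11 gamma11 mu21 gamma21 : ℝ)
    (hmu11 : mu11 = ∫ x, x ∂S1) (hgamma11 : gamma11 = ∫ x, x ∂ R1)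
    (hmu21 : mu21 = ∫ x, x ∂S2) (hgamma21 : gamma21 = ∫ x, x ∂ R2)
    (h1 h2 δ1 δ2 : ℝ → ℝ)
    (hh1 : ∀ z, h1 z = lam + beta1 - lam * z - beta1 * lapl R1 (lam - lam * z))
    (hh2 : ∀ z, h2 z = lam + beta2 - lam * z - beta2 * lapl R2 (lam - lam * z))
    (hδ1 : ∀ z, δ1 z = lapl S1 (h1 z)) (hδ2 : ∀ z, δ2 z = lapl S2 (h2 z))
    (hstab : lam * mu11 * (1 + beta1 * gamma11) < 1) :
    Filter.Tendsto
      (fun z : ℝ =>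
        (lam * (1 - z) + alpha * (1 - δ2 z)) * (1 - δ1 z) / ((δ1 z - z) * h1 z))
      (nhdsWithin 1 (Set.Iio 1))
      (nhds (mu11 * (lam + alpha * (lam * mu21 * (1 + beta2 * gamma21))) /
             (1 - lam * mu11 * (1 + beta1 * gamma11)))) := by
  exact incoming_factor_limit_general hlam hbeta1 hbeta2 hS1 hR1 hS2 hR2 hiS1 hiR1 hiS2 hiR2
    hmu11 hgamma11 hmu21 hgamma21 hh1 hh2 hδ1 hδ2 hstab.ne
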